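/- arXiv:2406.05302 — 3 statements merged into one kernel-verified Lean document; each statement's English description precedes it below -/
import Mathlib

section
/- Failure of the matricial Grothendieck theorem for trace classes (operational form of Theorem 1.1): For every constant C > 0 there exist a prime number n, a complex Hilbert space H, and families (T_{a,x})_{a,x∈Z_n}, (S_{b,y})_{b,y∈Z_n} of bounded operators on H whose block operators on the ℓ²-direct sum H^n both have norm at most 1, satisfying T_{a,x} S_{b,y} = S_{b,y} T_{a,x} for all a,x,b,y ∈ Z_n, such that ‖∑_{x,y,a,b∈Z_n with a+b=xy} (T_{a,x} S_{b,y})† (T_{a,x} S_{b,y})‖^{1/2} > C·n^{3/4}; whereas for every Hilbert space K and all such block-contractive families additionally satisfying T_{a,x} (S_{b,y})† = (S_{b,y})† T_{a,x} for all indices, one has ‖∑_{a+b=xy} (T_{a,x} S_{b,y})† (T_{a,x} S_{b,y})‖^{1/2} ≤ √2·n^{3/4}. -/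
/-!
Upper bound. Put `G_{b,y} = S_{b,y}† S_{b,y} v` for a vector `v`. Two-sided commutation gives
`‖T_{a,x} S_{b,y} v‖² = ⟪T_{a,x} v, T_{a,x} G_{b,y}⟫`, so by Cauchy-Schwarz over `(x, a)` the square
of `∑_{a+b=xy} ‖T_{a,x} S_{b,y} v‖²` is at most
`(∑_{x,a} ‖T_{a,x} v‖²) (∑_{x,a} ‖∑_y G_{xy-a,y}‖²)`. The first factor is at most `n ‖v‖²`. In the
second one, for `y ≠ y'` the map `(x, a) ↦ (xy - a, xy' - a)` is a bijection of the plane over the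
field `Z_n`, so the off-diagonal terms add up to inner products of the vectors `∑_b G_{b,y}`, of
norm at most `‖v‖`; the diagonal terms contribute at most `n ‖v‖²` for each `y`. Altogether
`‖gameOp T S‖ ≤ √2 n^{3/2}` (`sum_game_sq_le`, `norm_gameOp_le`), which is better than required.

Lower bound. With commutation of `T` and `S` alone the trivial bound `n²` on the norm of `gameOp` is
attained. On a space with a vacuum vector `Ω` and basis vectors `f_{a,x}`, `e_{b,y}`,
`u_{a,x,b,y}`, let `T_{a,x}` send `Ω ↦ n^{-1/2} f_{a,x}` and `e_{b,y} ↦ 1_{a+b=xy} u_{a,x,b,y}`, and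
let `S_{b,y}` send `Ω ↦ n^{-1/2} e_{b,y}` and `f_{a,x} ↦ 1_{a+b=xy} u_{a,x,b,y}`. Both products send
`Ω` to `n^{-1/2} 1_{a+b=xy} u_{a,x,b,y}` and vanish on the other basis vectors, the block operators
are partial isometries, and `∑_{a+b=xy} ‖T_{a,x} S_{b,y} Ω‖² = n³ / n`. Since `n` exceeds
`C n^{3/4}` once `n > C⁴`, any prime larger than `C⁴` works.
-/


/-!
Failure of the matricial Grothendieck theorem for trace classes (operational form of
Theorem 1.1): for every `C > 0` there are a prime `n`, a complex Hilbert space `H` and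
families `(T_{a,x})`, `(S_{b,y})` of operators on `H` whose block operators on the ℓ²-direct
sum `H^n` have norm at most 1, with commuting ranges, such that
`‖∑_{a+b=xy} (T_{a,x} S_{b,y})† (T_{a,x} S_{b,y})‖^{1/2} > C n^{3/4}`, while for every Hilbert
space `K` and all such block-contractive families additionally satisfying the two-sided
commutation relations, `‖∑_{a+b=xy} (T_{a,x} S_{b,y})† (T_{a,x} S_{b,y})‖^{1/2} ≤ √2 n^{3/4}`.
Here `Z_n` is modelled by `Fin n` with addition and multiplication modulo `n`.
-/

/-- A bundled complex Hilbert space. -/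
structure HilbertC : Type 1 where
  carrier : Type
  [nacg : NormedAddCommGroup carrier]
  [ips : InnerProductSpace ℂ carrier]
  [cs : CompleteSpace carrier]

attribute [instance] HilbertC.nacg HilbertC.ips HilbertC.cs

/-- The block operator of a family `(T_{a,x})` of operators on `H`, acting on the ℓ²-direct sum
`H^n` (modelled as `PiLp 2 (fun _ : Fin n => H)`) by `(v_x)_x ↦ (∑_x T_{a,x} v_x)_a`. -/
noncomputable def blockOp {n : ℕ} {H : Type*} [NormedAddCommGroup H]
    [InnerProductSpace ℂ H] (T : Fin n → Fin n → H →L[ℂ] H) :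
    (PiLp 2 fun _ : Fin n => H) →L[ℂ] (PiLp 2 fun _ : Fin n => H) :=
  ((PiLp.continuousLinearEquiv 2 ℂ (fun _ : Fin n => H)).symm.toContinuousLinearMap).comp
    (ContinuousLinearMap.pi fun a : Fin n =>
      ∑ x : Fin n, (T a x).comp (PiLp.proj 2 (fun _ : Fin n => H) x))

/-- The operator `∑_{x,y,a,b ∈ Z_n, a+b=xy} (T_{a,x} S_{b,y})† (T_{a,x} S_{b,y})` in `B(H)`. -/
noncomputable def gameOp {n : ℕ} {H : Type*} [NormedAddCommGroup H]
    [InnerProductSpace ℂ H] [CompleteSpace H]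
    (T S : Fin n → Fin n → H →L[ℂ] H) : H →L[ℂ] H :=
  ∑ x : Fin n, ∑ y : Fin n, ∑ a : Fin n, ∑ b : Fin n,
    if a + b = x * y then
      ContinuousLinearMap.adjoint (T a x ∘L S b y) ∘L (T a x ∘L S b y)
    else 0

/-! ### Upper bound for families commuting together with the adjoints -/

section Upper

variable {K : Type*} [NormedAddCommGroup K] [InnerProductSpace ℂ K]

theorem blockOp_apply {n : ℕ} (T : Fin n → Fin n → K →L[ℂ] K)
    (v : PiLp 2 fun _ : Fin n => K) (a : Fin n) :
    blockOp T v a = ∑ x, T a x (v x) := by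
  simp [blockOp]

/-- Each column of a block contraction is a contraction `H → H^n`; this is the only
consequence of block contractivity that the upper bound needs. -/
theorem sum_column_le {n : ℕ} {T : Fin n → Fin n → K →L[ℂ] K} (hT : ‖blockOp T‖ ≤ 1)
    (x : Fin n) (v : K) : ∑ a, ‖T a x v‖ ^ 2 ≤ ‖v‖ ^ 2 := by
  have h := (blockOp T).le_of_opNorm_le hT (PiLp.single 2 x v)
  rw [one_mul, PiLp.norm_single] at h
  have h2 := pow_le_pow_left₀ (norm_nonneg _) h 2
  rw [PiLp.norm_sq_eq_of_L2] at h2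
  refine le_trans (le_of_eq ?_) h2
  refine Finset.sum_congr rfl fun a _ => ?_
  rw [blockOp_apply, Finset.sum_eq_single x]
  · simp
  · intro y _ hy
    simp [hy]
  · simp

theorem sum_line_eq {R : Type*} [CommRing R] [Fintype R] [DecidableEq R] {M : Type*}
    [AddCommMonoid M] (b z : R) (f : R → M) :
    (∑ a, if a + b = z then f a else 0) = f (z - b) := by
  simp only [← eq_sub_iff_add_eq]
  simp

/-- For `y ≠ y'`, the affine map `(x, a) ↦ (x y - a, x y' - a)` is a bijection of `R²`. -/
theorem sum_lines_through {R : Type*} [Field R] [Fintype R] {y y' : R} (h : y ≠ y')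
    (f : R → R → ℂ) :
    ∑ x, ∑ a, f (x * y - a) (x * y' - a) = ∑ b, ∑ b', f b b' := by
  rw [← Fintype.sum_prod_type' (f := fun x a => f (x * y - a) (x * y' - a)),
    ← Fintype.sum_prod_type' (f := f)]
  have h' : y - y' ≠ 0 := sub_ne_zero.mpr h
  refine Fintype.sum_equiv
    ⟨fun p => (p.1 * y - p.2, p.1 * y' - p.2),
      fun q => ((q.1 - q.2) / (y - y'), (q.1 - q.2) / (y - y') * y - q.1), ?_, ?_⟩ _ _ ?_
  · rintro ⟨x, a⟩
    ext <;> simp only [] <;> field_simp <;> ring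
  · rintro ⟨b, b'⟩
    ext <;> simp only [] <;> field_simp <;> ring
  · rintro ⟨x, a⟩
    rfl

/-- Expanding the square, the terms with `y ≠ y'` contribute
`⟪∑ b, G b y, ∑ b', G b' y'⟫`, because a pair `(b, b')` comes from exactly one `(x, a)`, and the
diagonal terms contribute `card R` times `∑ b, ‖G b y‖ ^ 2`. -/
theorem sum_line_norm_sq_le {R : Type*} [Field R] [Fintype R] [DecidableEq R]
    (G : R → R → K) (c : ℝ) (h1 : ∀ y, ‖∑ b, G b y‖ ^ 2 ≤ c)
    (h2 : ∀ y, ∑ b, ‖G b y‖ ^ 2 ≤ c) :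
    ∑ x, ∑ a, ‖∑ y, G (x * y - a) y‖ ^ 2 ≤ 2 * (Fintype.card R : ℝ) ^ 2 * c := by
  have hc : 0 ≤ c := (sq_nonneg _).trans (h1 0)
  have hexp : ∑ x, ∑ a, ‖∑ y, G (x * y - a) y‖ ^ 2 =
      ∑ y, ∑ y', (∑ x, ∑ a, inner ℂ (G (x * y - a) y) (G (x * y' - a) y')).re := by
    have : ∀ x a, ‖∑ y, G (x * y - a) y‖ ^ 2 =
        ∑ y, ∑ y', (inner ℂ (G (x * y - a) y) (G (x * y' - a) y')).re := by
      intro x a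
      rw [← inner_self_eq_norm_sq (𝕜 := ℂ), sum_inner]
      simp only [inner_sum, map_sum]
      rfl
    simp only [this, Complex.re_sum]
    have hx : ∀ x, ∑ a, ∑ y, ∑ y', (inner ℂ (G (x * y - a) y) (G (x * y' - a) y')).re =
        ∑ y, ∑ y', ∑ a, (inner ℂ (G (x * y - a) y) (G (x * y' - a) y')).re := by
      intro x
      rw [Finset.sum_comm]
      exact Finset.sum_congr rfl fun y _ => Finset.sum_comm
    rw [Finset.sum_congr rfl fun x _ => hx x, Finset.sum_comm]
    exact Finset.sum_congr rfl fun y _ => Finset.sum_comm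
  rw [hexp]
  have hpair : ∀ y y', (∑ x, ∑ a, inner ℂ (G (x * y - a) y) (G (x * y' - a) y')).re ≤
      c + if y = y' then (Fintype.card R : ℝ) * c else 0 := by
    intro y y'
    split_ifs with h
    · subst h
      have : ∀ x, (∑ a, inner ℂ (G (x * y - a) y) (G (x * y - a) y)).re ≤ c := by
        intro x
        refine le_trans (le_of_eq ?_) (h2 y)
        rw [Complex.re_sum, ← (Equiv.subLeft (x * y)).sum_comp]
        refine Finset.sum_congr rfl fun a _ => ?_
        simp only [Equiv.subLeft_apply, sub_sub_cancel]
        exact inner_self_eq_norm_sq (𝕜 := ℂ) _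
      rw [Complex.re_sum]
      refine (Finset.sum_le_sum fun x _ => this x).trans ?_
      simp
      exact hc
    · rw [sum_lines_through h (fun b b' => inner ℂ (G b y) (G b' y'))]
      simp only [← inner_sum]
      rw [← sum_inner]
      have h3 := re_inner_le_norm (𝕜 := ℂ) (∑ b, G b y) (∑ b, G b y')
      have h4 := h1 y
      have h5 := h1 y'
      have h6 : (inner ℂ (∑ b, G b y) (∑ b, G b y')).re ≤
        ‖∑ b, G b y‖ * ‖∑ b, G b y'‖ := h3
      nlinarith [sq_nonneg (‖∑ b, G b y‖ - ‖∑ b, G b y'‖)]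
  refine (Finset.sum_le_sum fun y _ => Finset.sum_le_sum fun y' _ => hpair y y').trans ?_
  simp [Finset.sum_add_distrib]
  nlinarith

variable [CompleteSpace K]
open ContinuousLinearMap in
/-- The quadratic-form version of the upper bound. By two-sided commutation,
`‖T a x (S b y v)‖ ^ 2 = re ⟪T a x v, T a x (G b y)⟫` with `G b y = (S b y)† (S b y) v`; the claim
follows from Cauchy-Schwarz over `(x, a)` and `sum_line_norm_sq_le`. -/
theorem sum_game_sq_le {R : Type*} [Field R] [Fintype R] [DecidableEq R]
    (T S : R → R → K →L[ℂ] K)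
    (hT : ∀ x v, ∑ a, ‖T a x v‖ ^ 2 ≤ ‖v‖ ^ 2)
    (hS : ∀ x v, ∑ a, ‖S a x v‖ ^ 2 ≤ ‖v‖ ^ 2)
    (hTS : ∀ a x b y, T a x ∘L S b y = S b y ∘L T a x)
    (hTS' : ∀ a x b y, T a x ∘L adjoint (S b y) = adjoint (S b y) ∘L T a x) (v : K) :
    (∑ x, ∑ y, ∑ a, ∑ b, if a + b = x * y then ‖T a x (S b y v)‖ ^ 2 else 0) ^ 2 ≤
      2 * (Fintype.card R : ℝ) ^ 3 * ‖v‖ ^ 4 := by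
  have hS1 : ∀ b y w, ‖S b y w‖ ≤ ‖w‖ := fun b y w =>
    (sq_le_sq₀ (norm_nonneg _) (norm_nonneg _)).mp ((Finset.single_le_sum
      (f := fun b => ‖S b y w‖ ^ 2) (fun _ _ => sq_nonneg _) (Finset.mem_univ b)).trans (hS y w))
  have hT1 : ∀ b y w, ‖T b y w‖ ≤ ‖w‖ := fun b y w =>
    (sq_le_sq₀ (norm_nonneg _) (norm_nonneg _)).mp ((Finset.single_le_sum
      (f := fun b => ‖T b y w‖ ^ 2) (fun _ _ => sq_nonneg _) (Finset.mem_univ b)).trans (hT y w))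
  set G : R → R → K := fun b y => adjoint (S b y) (S b y v) with hG
  have hterm : ∀ a x b y, ‖T a x (S b y v)‖ ^ 2 = (inner ℂ (T a x v) (T a x (G b y))).re := by
    intro a x b y
    have e1 : T a x (S b y v) = S b y (T a x v) := DFunLike.congr_fun (hTS a x b y) v
    have e2 : T a x (G b y) = adjoint (S b y) (T a x (S b y v)) :=
      DFunLike.congr_fun (hTS' a x b y) (S b y v)
    rw [e2, adjoint_inner_right, ← e1]
    exact (inner_self_eq_norm_sq (𝕜 := ℂ) _).symm
  have hQ : (∑ x, ∑ y, ∑ a, ∑ b, if a + b = x * y then ‖T a x (S b y v)‖ ^ 2 else 0) =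
      ∑ x, ∑ a, (inner ℂ (T a x v) (T a x (∑ y, G (x * y - a) y))).re := by
    refine Finset.sum_congr rfl fun x _ => ?_
    rw [Finset.sum_comm]
    refine Finset.sum_congr rfl fun a _ => ?_
    simp only [add_comm a, sum_line_eq, hterm, map_sum, inner_sum, Complex.re_sum]
  have hG1 : ∀ y, ‖∑ b, G b y‖ ^ 2 ≤ ‖v‖ ^ 2 := by
    intro y
    set w := ∑ b, G b y with hw
    have e : ‖w‖ ^ 2 = ∑ b, (inner ℂ (S b y v) (S b y w)).re := by
      rw [← inner_self_eq_norm_sq (𝕜 := ℂ)]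
      nth_rw 1 [hw]
      simp only [sum_inner, hG, adjoint_inner_left, map_sum]
      rfl
    have e2 : ‖w‖ ^ 2 ≤ ∑ b, (‖S b y v‖ ^ 2 + ‖S b y w‖ ^ 2) / 2 := by
      rw [e]
      refine Finset.sum_le_sum fun b _ => ?_
      have h3 : (inner ℂ (S b y v) (S b y w)).re ≤ ‖S b y v‖ * ‖S b y w‖ :=
        re_inner_le_norm (𝕜 := ℂ) _ _
      nlinarith [sq_nonneg (‖S b y v‖ - ‖S b y w‖)]
    rw [← Finset.sum_div, Finset.sum_add_distrib] at e2
    linarith [hS y v, hS y w]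
  have hG2 : ∀ y, ∑ b, ‖G b y‖ ^ 2 ≤ ‖v‖ ^ 2 := by
    intro y
    refine (Finset.sum_le_sum fun b _ => ?_).trans (hS y v)
    refine pow_le_pow_left₀ (norm_nonneg _) ?_ 2
    refine (le_of_opNorm_le _ (?_ : _ ≤ (1 : ℝ)) _).trans_eq (one_mul _)
    rw [LinearIsometryEquiv.norm_map]
    exact opNorm_le_bound _ zero_le_one fun w => by simpa using hS1 b y w
  have hX := sum_line_norm_sq_le G (‖v‖ ^ 2) hG1 hG2
  have hle : (∑ x, ∑ a, (inner ℂ (T a x v) (T a x (∑ y, G (x * y - a) y))).re) ≤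
      ∑ p : R × R, ‖T p.2 p.1 v‖ * ‖∑ y, G (p.1 * y - p.2) y‖ := by
    rw [Fintype.sum_prod_type]
    refine Finset.sum_le_sum fun x _ => Finset.sum_le_sum fun a _ => ?_
    refine (re_inner_le_norm (𝕜 := ℂ) _ _).trans ?_
    gcongr
    exact hT1 _ _ _
  have hnn : 0 ≤ ∑ x, ∑ y, ∑ a, ∑ b, if a + b = x * y then ‖T a x (S b y v)‖ ^ 2 else 0 := by
    refine Finset.sum_nonneg fun x _ => Finset.sum_nonneg fun y _ => Finset.sum_nonneg
      fun a _ => Finset.sum_nonneg fun b _ => ?_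
    split_ifs <;> positivity
  refine (pow_le_pow_left₀ hnn (hQ.trans_le hle) 2).trans ?_
  refine (Finset.sum_mul_sq_le_sq_mul_sq _ _ _).trans ?_
  rw [Fintype.sum_prod_type, Fintype.sum_prod_type]
  have hsum : ∑ x, ∑ a, ‖T a x v‖ ^ 2 ≤ Fintype.card R * ‖v‖ ^ 2 := by
    refine (Finset.sum_le_sum fun x _ => hT x v).trans ?_
    simp
  refine (mul_le_mul hsum hX (by positivity) (by positivity)).trans_eq (by ring)

open ContinuousLinearMap in
theorem inner_gameOp {n : ℕ} (T S : Fin n → Fin n → K →L[ℂ] K) (v w : K) :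
    inner ℂ (gameOp T S v) w = ∑ x, ∑ y, ∑ a, ∑ b,
      if a + b = x * y then inner ℂ (T a x (S b y v)) (T a x (S b y w)) else 0 := by
  simp only [gameOp, sum_apply, sum_inner]
  refine Finset.sum_congr rfl fun x _ => Finset.sum_congr rfl fun y _ =>
    Finset.sum_congr rfl fun a _ => Finset.sum_congr rfl fun b _ => ?_
  split_ifs
  · rw [comp_apply, adjoint_inner_left]
    rfl
  · simp

/-- `gameOp T S` is positive, so its norm is controlled by its quadratic form. -/
theorem norm_gameOp_le {n : ℕ} (T S : Fin n → Fin n → K →L[ℂ] K) {M : ℝ} (hM : 0 ≤ M)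
    (h : ∀ v, (∑ x, ∑ y, ∑ a, ∑ b,
      if a + b = x * y then ‖T a x (S b y v)‖ ^ 2 else 0) ≤ M * ‖v‖ ^ 2) :
    ‖gameOp T S‖ ≤ M := by
  refine ContinuousLinearMap.opNorm_le_bound _ hM fun v => ?_
  set w := gameOp T S v with hw
  rcases (norm_nonneg v).eq_or_lt with hv | hv
  · have : v = 0 := norm_eq_zero.mp hv.symm
    simp [hw, this]
  rcases (norm_nonneg w).eq_or_lt with hw0 | hw0
  · rw [← hw0]
    positivity
  -- Weighted AM-GM, summed over the winning quadruples, replaces Cauchy-Schwarz.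
  have key : 2 * ‖v‖ * ‖w‖ * ‖w‖ ^ 2 ≤
      ‖w‖ ^ 2 * (∑ x, ∑ y, ∑ a, ∑ b, if a + b = x * y then ‖T a x (S b y v)‖ ^ 2 else 0) +
      ‖v‖ ^ 2 * (∑ x, ∑ y, ∑ a, ∑ b, if a + b = x * y then ‖T a x (S b y w)‖ ^ 2 else 0) := by
    have e : ‖w‖ ^ 2 = (inner ℂ (gameOp T S v) w).re :=
      (inner_self_eq_norm_sq (𝕜 := ℂ) w).symm
    nth_rw 1 [e]
    rw [inner_gameOp]
    simp only [Complex.re_sum, Finset.mul_sum, ← Finset.sum_add_distrib]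
    refine Finset.sum_le_sum fun x _ => Finset.sum_le_sum fun y _ => Finset.sum_le_sum
      fun a _ => Finset.sum_le_sum fun b _ => ?_
    split_ifs
    · have h3 : (inner ℂ (T a x (S b y v)) (T a x (S b y w))).re ≤
          ‖T a x (S b y v)‖ * ‖T a x (S b y w)‖ := re_inner_le_norm (𝕜 := ℂ) _ _
      have h4 := mul_le_mul_of_nonneg_left h3 (by positivity : 0 ≤ 2 * ‖v‖ * ‖w‖)
      nlinarith [sq_nonneg (‖w‖ * ‖T a x (S b y v)‖ - ‖v‖ * ‖T a x (S b y w)‖)]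
    · simp
  have h1 := mul_le_mul_of_nonneg_left (h v) (sq_nonneg ‖w‖)
  have h2 := mul_le_mul_of_nonneg_left (h w) (sq_nonneg ‖v‖)
  have h3 : (2 * ‖v‖ * ‖w‖ ^ 2) * ‖w‖ ≤ (2 * ‖v‖ * ‖w‖ ^ 2) * (M * ‖v‖) := by nlinarith
  exact le_of_mul_le_mul_left h3 (by positivity)

theorem sqrt_norm_gameOp_le {n : ℕ} (hn : n.Prime) (T S : Fin n → Fin n → K →L[ℂ] K)
    (hT : ‖blockOp T‖ ≤ 1) (hS : ‖blockOp S‖ ≤ 1)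
    (hTS : ∀ a x b y, T a x ∘L S b y = S b y ∘L T a x)
    (hTS' : ∀ a x b y, T a x ∘L ContinuousLinearMap.adjoint (S b y) =
      ContinuousLinearMap.adjoint (S b y) ∘L T a x) :
    Real.sqrt ‖gameOp T S‖ ≤ Real.sqrt 2 * (n : ℝ) ^ ((3 : ℝ) / 4) := by
  have hn0 : (0 : ℝ) ≤ n := Nat.cast_nonneg n
  have h34 : ((n : ℝ) ^ ((3 : ℝ) / 4)) ^ 4 = (n : ℝ) ^ 3 := by
    rw [← Real.rpow_natCast, ← Real.rpow_mul hn0, ← Real.rpow_natCast]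
    norm_num
  set q := (n : ℝ) ^ ((3 : ℝ) / 4) with hq
  have hq0 : 0 ≤ q := Real.rpow_nonneg hn0 _
  refine Real.sqrt_le_iff.mpr ⟨by positivity, ?_⟩
  rw [mul_pow, Real.sq_sqrt zero_le_two]
  refine norm_gameOp_le T S (by positivity) fun v => ?_
  obtain ⟨k, rfl⟩ : ∃ k, n = k + 1 := ⟨n - 1, by have := hn.pos; omega⟩
  have : Fact (k + 1).Prime := ⟨hn⟩
  -- `ZMod (k + 1)` is definitionally `Fin (k + 1)`, with the same ring operations.
  have h := sum_game_sq_le (R := ZMod (k + 1)) T S (sum_column_le hT) (sum_column_le hS)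
    hTS hTS' v
  have hcard : @Fintype.card (ZMod (k + 1)) (Fin.fintype _) = k + 1 := Fintype.card_fin _
  rw [hcard, ← h34] at h
  refine le_of_abs_le (abs_le_of_sq_le_sq (h.trans ?_) (by positivity))
  have : 0 ≤ q ^ 4 * ‖v‖ ^ 4 := by positivity
  nlinarith

end Upper

/-! ### Commuting families reaching `n ^ 2` -/

section Lower

/-- Labels of an orthonormal basis of the Hilbert space of the counterexample: one vacuum vector,
vectors indexed by Bob's pairs `(b, y)`, vectors indexed by Alice's pairs `(a, x)`, and vectors
indexed by pairs `((a, x), (b, y))`, in this order. -/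
abbrev GameIdx (n : ℕ) : Type :=
  Unit ⊕ (Fin n × Fin n) ⊕ (Fin n × Fin n) ⊕ ((Fin n × Fin n) × (Fin n × Fin n))

/-- The finite-dimensional Hilbert space `ℂ ⊕ ℂ^{n²} ⊕ ℂ^{n²} ⊕ ℂ^{n⁴}` with basis `GameIdx n`. -/
abbrev GameSpace (n : ℕ) : Type := EuclideanSpace ℂ (GameIdx n)

/-- The operator `T_{a,x}`: it sends the vacuum to `n^{-1/2}` times the basis vector of `(a, x)`,
the basis vector of `(b, y)` to that of `((a, x), (b, y))` if `a + b = x y` and to `0` otherwise,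
and kills the other basis vectors. -/
noncomputable def aliceOp (n : ℕ) (a x : Fin n) : GameSpace n →L[ℂ] GameSpace n :=
  LinearMap.toContinuousLinearMap
    { toFun := fun v => WithLp.toLp 2 fun
        | .inl _ => 0
        | .inr (.inl _) => 0
        | .inr (.inr (.inl q)) => if q = (a, x) then (Real.sqrt n : ℂ)⁻¹ * v (.inl ()) else 0
        | .inr (.inr (.inr (q, r))) =>
            if q = (a, x) ∧ a + r.1 = x * r.2 then v (.inr (.inl r)) else 0
      map_add' := fun v w => by
        ext i
        rcases i with _ | _ | _ | _ <;> simp [mul_add] <;> split_ifs <;> simp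
      map_smul' := fun c v => by
        ext i
        rcases i with _ | _ | _ | _ <;> simp [mul_left_comm] }

/-- The operator `S_{b,y}`: it sends the vacuum to `n^{-1/2}` times the basis vector of `(b, y)`,
the basis vector of `(a, x)` to that of `((a, x), (b, y))` if `a + b = x y` and to `0` otherwise,
and kills the other basis vectors. -/
noncomputable def bobOp (n : ℕ) (b y : Fin n) : GameSpace n →L[ℂ] GameSpace n :=
  LinearMap.toContinuousLinearMap
    { toFun := fun v => WithLp.toLp 2 fun
        | .inl _ => 0
        | .inr (.inl r) => if r = (b, y) then (Real.sqrt n : ℂ)⁻¹ * v (.inl ()) else 0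
        | .inr (.inr (.inl _)) => 0
        | .inr (.inr (.inr (q, r))) =>
            if r = (b, y) ∧ q.1 + b = q.2 * y then v (.inr (.inr (.inl q))) else 0
      map_add' := fun v w => by
        ext i
        rcases i with _ | _ | _ | _ <;> simp [mul_add] <;> split_ifs <;> simp
      map_smul' := fun c v => by
        ext i
        rcases i with _ | _ | _ | _ <;> simp [mul_left_comm] }

variable {n : ℕ}

theorem aliceOp_apply (a x : Fin n) (v : GameSpace n) :
    aliceOp n a x v = WithLp.toLp 2 fun
        | .inl _ => 0
        | .inr (.inl _) => 0
        | .inr (.inr (.inl q)) => if q = (a, x) then (Real.sqrt n : ℂ)⁻¹ * v (.inl ()) else 0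
        | .inr (.inr (.inr (q, r))) =>
            if q = (a, x) ∧ a + r.1 = x * r.2 then v (.inr (.inl r)) else 0 := rfl

theorem bobOp_apply (b y : Fin n) (v : GameSpace n) :
    bobOp n b y v = WithLp.toLp 2 fun
        | .inl _ => 0
        | .inr (.inl r) => if r = (b, y) then (Real.sqrt n : ℂ)⁻¹ * v (.inl ()) else 0
        | .inr (.inr (.inl _)) => 0
        | .inr (.inr (.inr (q, r))) =>
            if r = (b, y) ∧ q.1 + b = q.2 * y then v (.inr (.inr (.inl q))) else 0 := rfl

theorem aliceOp_comp_bobOp_apply (a x b y : Fin n) (v : GameSpace n) :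
    aliceOp n a x (bobOp n b y v) = if a + b = x * y then
      PiLp.single 2 (.inr (.inr (.inr ((a, x), (b, y))))) ((Real.sqrt n : ℂ)⁻¹ * v (.inl ()))
      else 0 := by
  rw [aliceOp_apply, bobOp_apply]
  ext i
  rcases i with _ | _ | _ | ⟨q, r⟩ <;> split_ifs with h <;> simp
  · grind
  · grind

theorem bobOp_comp_aliceOp_apply (a x b y : Fin n) (v : GameSpace n) :
    bobOp n b y (aliceOp n a x v) = if a + b = x * y then
      PiLp.single 2 (.inr (.inr (.inr ((a, x), (b, y))))) ((Real.sqrt n : ℂ)⁻¹ * v (.inl ()))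
      else 0 := by
  rw [aliceOp_apply, bobOp_apply]
  ext i
  rcases i with _ | _ | _ | ⟨q, r⟩ <;> split_ifs with h <;> simp
  · grind
  · grind

theorem norm_inv_sqrt_mul_sq (z : ℂ) : ‖(Real.sqrt n : ℂ)⁻¹ * z‖ ^ 2 = (n : ℝ)⁻¹ * ‖z‖ ^ 2 := by
  rw [norm_mul, mul_pow, norm_inv, Complex.norm_real, inv_pow, Real.norm_eq_abs, sq_abs,
    Real.sq_sqrt (Nat.cast_nonneg n)]

theorem sum_fin_line [NeZero n] (b z : Fin n) (c : ℝ) :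
    (∑ a : Fin n, if a + b = z then c else 0) = c := by
  simp only [← eq_sub_iff_add_eq]
  simp

theorem norm_blockOp_le_of_sq {K : Type*} [NormedAddCommGroup K] [InnerProductSpace ℂ K]
    {T : Fin n → Fin n → K →L[ℂ] K}
    (h : ∀ v : Fin n → K, ∑ a, ‖∑ x, T a x (v x)‖ ^ 2 ≤ ∑ x, ‖v x‖ ^ 2) : ‖blockOp T‖ ≤ 1 := by
  refine ContinuousLinearMap.opNorm_le_bound _ zero_le_one fun v => ?_
  rw [one_mul]
  refine (sq_le_sq₀ (norm_nonneg _) (norm_nonneg _)).mp ?_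
  rw [PiLp.norm_sq_eq_of_L2, PiLp.norm_sq_eq_of_L2]
  refine le_trans (le_of_eq ?_) (h v)
  simp [blockOp]

theorem norm_blockOp_aliceOp [NeZero n] : ‖blockOp (aliceOp n)‖ ≤ 1 := by
  refine norm_blockOp_le_of_sq fun v => ?_
  have hcol : ∀ a, ‖∑ x, aliceOp n a x (v x)‖ ^ 2 = ∑ x, ((n : ℝ)⁻¹ * ‖v x (.inl ())‖ ^ 2 +
      ∑ r : Fin n × Fin n, if a + r.1 = x * r.2 then ‖v x (.inr (.inl r))‖ ^ 2 else 0) := by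
    intro a
    have h : ∑ x, aliceOp n a x (v x) = WithLp.toLp 2 fun
        | .inl _ => 0
        | .inr (.inl _) => 0
        | .inr (.inr (.inl q)) =>
            if q.1 = a then (Real.sqrt n : ℂ)⁻¹ * v q.2 (.inl ()) else 0
        | .inr (.inr (.inr (q, r))) =>
            if q.1 = a then (if a + r.1 = q.2 * r.2 then v q.2 (.inr (.inl r)) else 0) else 0 := by
      ext i
      rcases i with _ | _ | ⟨a', x'⟩ | ⟨⟨a', x'⟩, r⟩ <;>
        simp [aliceOp_apply, WithLp.ofLp_sum, Finset.sum_apply, ite_and, Prod.ext_iff]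
    rw [h, EuclideanSpace.norm_sq_eq]
    simp only [Fintype.sum_sum_type, Fintype.sum_prod_type, apply_ite (fun z : ℂ => ‖z‖ ^ 2),
      norm_inv_sqrt_mul_sq, norm_zero]
    simp [Finset.sum_add_distrib]
  simp only [hcol]
  rw [Finset.sum_comm]
  refine Finset.sum_le_sum fun x _ => ?_
  rw [Finset.sum_add_distrib, Finset.sum_comm]
  simp only [sum_fin_line]
  rw [EuclideanSpace.norm_sq_eq]
  have hn : (n : ℝ) ≠ 0 := Nat.cast_ne_zero.mpr (NeZero.ne n)
  simp [Fintype.sum_sum_type, hn]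
  positivity

theorem norm_blockOp_bobOp [NeZero n] : ‖blockOp (bobOp n)‖ ≤ 1 := by
  refine norm_blockOp_le_of_sq fun v => ?_
  have hcol : ∀ b, ‖∑ y, bobOp n b y (v y)‖ ^ 2 = ∑ y, ((n : ℝ)⁻¹ * ‖v y (.inl ())‖ ^ 2 +
      ∑ q : Fin n × Fin n,
        if b + q.1 = q.2 * y then ‖v y (.inr (.inr (.inl q)))‖ ^ 2 else 0) := by
    intro b
    have h : ∑ y, bobOp n b y (v y) = WithLp.toLp 2 fun
        | .inl _ => 0
        | .inr (.inl r) =>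
            if r.1 = b then (Real.sqrt n : ℂ)⁻¹ * v r.2 (.inl ()) else 0
        | .inr (.inr (.inl _)) => 0
        | .inr (.inr (.inr (q, r))) =>
            if r.1 = b then
              (if b + q.1 = q.2 * r.2 then v r.2 (.inr (.inr (.inl q))) else 0) else 0 := by
      ext i
      rcases i with _ | ⟨b', y'⟩ | _ | ⟨q, ⟨b', y'⟩⟩ <;>
        simp [bobOp_apply, WithLp.ofLp_sum, Finset.sum_apply, ite_and, Prod.ext_iff,
          add_comm b]
    rw [h, EuclideanSpace.norm_sq_eq]
    simp only [Fintype.sum_sum_type, Fintype.sum_prod_type, apply_ite (fun z : ℂ => ‖z‖ ^ 2),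
      norm_inv_sqrt_mul_sq, norm_zero]
    simp [Finset.sum_add_distrib]
    conv_rhs => rw [Finset.sum_comm]
    exact Finset.sum_congr rfl fun q _ => Finset.sum_comm
  simp only [hcol]
  rw [Finset.sum_comm]
  refine Finset.sum_le_sum fun y _ => ?_
  rw [Finset.sum_add_distrib, Finset.sum_comm]
  simp only [sum_fin_line]
  rw [EuclideanSpace.norm_sq_eq]
  have hn : (n : ℝ) ≠ 0 := Nat.cast_ne_zero.mpr (NeZero.ne n)
  simp [Fintype.sum_sum_type, hn]
  have h1 : 0 ≤ ∑ r, ‖v y (.inr (.inl r))‖ ^ 2 := by positivity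
  have h2 : 0 ≤ ∑ u, ‖v y (.inr (.inr (.inr u)))‖ ^ 2 := by positivity
  linarith

/-- The vacuum vector already gives the quadratic form of `gameOp` the value `n ^ 2`: there are
`n ^ 3` quadruples with `a + b = x y`, and each contributes `1 / n`. -/
theorem sq_le_norm_gameOp [NeZero n] : (n : ℝ) ^ 2 ≤ ‖gameOp (aliceOp n) (bobOp n)‖ := by
  set e : GameSpace n := PiLp.single 2 (.inl ()) 1 with he
  have hn : (n : ℝ) ≠ 0 := Nat.cast_ne_zero.mpr (NeZero.ne n)
  have he1 : ‖e‖ = 1 := by simp [he]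
  have hterm : ∀ a x b y, (if a + b = x * y then
      inner ℂ (aliceOp n a x (bobOp n b y e)) (aliceOp n a x (bobOp n b y e)) else 0) =
      (((if a + b = x * y then (n : ℝ)⁻¹ else 0 : ℝ)) : ℂ) := by
    intro a x b y
    split_ifs with h
    · rw [aliceOp_comp_bobOp_apply, if_pos h, inner_self_eq_norm_sq_to_K, PiLp.norm_single,
        ← RCLike.ofReal_pow, norm_inv_sqrt_mul_sq]
      simp [he]
    · simp
  have hval : inner ℂ (gameOp (aliceOp n) (bobOp n) e) e = (((n : ℝ) ^ 2 : ℝ) : ℂ) := by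
    rw [inner_gameOp]
    simp only [hterm, ← Complex.ofReal_sum]
    congr 1
    have : ∀ x y : Fin n, (∑ a, ∑ b, if a + b = x * y then (n : ℝ)⁻¹ else 0) = 1 := by
      intro x y
      rw [Finset.sum_comm]
      simp only [sum_fin_line]
      simp [hn]
    simp only [this]
    simp [sq]
  calc (n : ℝ) ^ 2 = ‖inner ℂ (gameOp (aliceOp n) (bobOp n) e) e‖ := by
        rw [hval, Complex.norm_real, Real.norm_of_nonneg (by positivity)]
    _ ≤ ‖gameOp (aliceOp n) (bobOp n) e‖ * ‖e‖ := norm_inner_le_norm _ _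
    _ ≤ ‖gameOp (aliceOp n) (bobOp n)‖ := by
        rw [he1, mul_one]
        exact (gameOp (aliceOp n) (bobOp n)).unit_le_opNorm e he1.le

end Lower

theorem stmt_3 :
    ∀ C : ℝ, 0 < C →
      ∃ (n : ℕ) (_ : n.Prime),
        (∃ (H : HilbertC) (T S : Fin n → Fin n → H.carrier →L[ℂ] H.carrier),
          ‖blockOp T‖ ≤ 1 ∧ ‖blockOp S‖ ≤ 1 ∧
          (∀ a x b y, T a x ∘L S b y = S b y ∘L T a x) ∧
          C * (n : ℝ) ^ ((3 : ℝ) / 4) < Real.sqrt ‖gameOp T S‖) ∧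
        (∀ (K : HilbertC) (T S : Fin n → Fin n → K.carrier →L[ℂ] K.carrier),
          ‖blockOp T‖ ≤ 1 → ‖blockOp S‖ ≤ 1 →
          (∀ a x b y, T a x ∘L S b y = S b y ∘L T a x) →
          (∀ a x b y,
            T a x ∘L ContinuousLinearMap.adjoint (S b y) =
              ContinuousLinearMap.adjoint (S b y) ∘L T a x) →
          Real.sqrt ‖gameOp T S‖ ≤ Real.sqrt 2 * (n : ℝ) ^ ((3 : ℝ) / 4)) := by
  intro C hC
  obtain ⟨n, hCn, hn⟩ := Nat.exists_infinite_primes (⌈C ^ 4⌉₊ + 1)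
  have : NeZero n := ⟨hn.ne_zero⟩
  have hn0 : (0 : ℝ) < n := Nat.cast_pos.mpr hn.pos
  refine ⟨n, hn, ⟨⟨GameSpace n⟩, aliceOp n, bobOp n, norm_blockOp_aliceOp, norm_blockOp_bobOp,
    fun a x b y => ?_, ?_⟩, fun K T S hT hS hTS hTS' => sqrt_norm_gameOp_le hn T S hT hS hTS hTS'⟩
  · ext1 v
    exact (aliceOp_comp_bobOp_apply a x b y v).trans (bobOp_comp_aliceOp_apply a x b y v).symm
  · have hC4 : C ^ 4 < n := by
      have h1 : ((⌈C ^ 4⌉₊ + 1 : ℕ) : ℝ) ≤ n := Nat.cast_le.mpr hCn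
      push_cast at h1
      linarith [Nat.le_ceil (C ^ 4)]
    have hC1 : C < (n : ℝ) ^ ((1 : ℝ) / 4) := by
      refine lt_of_pow_lt_pow_left₀ 4 (by positivity) (hC4.trans_eq ?_)
      rw [← Real.rpow_natCast, ← Real.rpow_mul hn0.le]
      norm_num
    calc C * (n : ℝ) ^ ((3 : ℝ) / 4)
        < (n : ℝ) ^ ((1 : ℝ) / 4) * (n : ℝ) ^ ((3 : ℝ) / 4) := by gcongr
      _ = n := by
        rw [← Real.rpow_add hn0]
        norm_num
      _ ≤ _ := Real.le_sqrt_of_sq_le sq_le_norm_gameOp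
end

section
/- Upper bound of Theorem 3.1 (Lemma 3.3, max-norm bound for η_n): Let n be a prime number and H a complex Hilbert space. Let (T_{a,x})_{a,x∈Z_n} and (S_{b,y})_{b,y∈Z_n} be families of bounded operators on H whose block operators on the ℓ²-direct sum H^n both have norm at most 1, and suppose T_{a,x} S_{b,y} = S_{b,y} T_{a,x} and T_{a,x} (S_{b,y})† = (S_{b,y})† T_{a,x} for all a,x,b,y ∈ Z_n. Then ‖∑_{x,y,a,b∈Z_n with a+b=xy} (T_{a,x} S_{b,y})† (T_{a,x} S_{b,y})‖ ≤ 2·n·√n. -/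
open ContinuousLinearMap in
/-- If the quadratic form of `∑ R† R` is bounded by `c`, so is its operator norm. -/
lemma norm_sum_adjoint_comp_le {ι H : Type*} [Fintype ι] [NormedAddCommGroup H]
    [InnerProductSpace ℂ H] [CompleteSpace H] (R : ι → H →L[ℂ] H) {c : ℝ} (hc : 0 ≤ c)
    (h : ∀ v, ∑ i, ‖R i v‖ ^ 2 ≤ c * ‖v‖ ^ 2) :
    ‖∑ i, adjoint (R i) ∘L R i‖ ≤ c := by
  refine ContinuousLinearMap.opNorm_le_bound _ hc fun v => ?_
  set P : H →L[ℂ] H := ∑ i, adjoint (R i) ∘L R i with hP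
  have key : ‖P v‖ ^ 2 = ∑ i, (inner ℂ (R i v) (R i (P v))).re := by
    have h1 : ‖P v‖ ^ 2 = (inner ℂ (P v) (P v)).re := (inner_self_eq_norm_sq (𝕜 := ℂ) _).symm
    rw [h1]
    nth_rewrite 1 [hP]
    simp only [_root_.sum_apply, sum_inner, Complex.re_sum, comp_apply, adjoint_inner_left]
  have cs : ‖P v‖ ^ 2 ≤ ∑ i, ‖R i v‖ * ‖R i (P v)‖ := by
    rw [key]
    exact Finset.sum_le_sum fun i _ => re_inner_le_norm (𝕜 := ℂ) _ _
  have cs2 := Finset.sum_mul_sq_le_sq_mul_sq Finset.univ (fun i => ‖R i v‖)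
    (fun i => ‖R i (P v)‖)
  have h4 : (‖P v‖ ^ 2) ^ 2 ≤ (c * ‖v‖ ^ 2) * (c * ‖P v‖ ^ 2) :=
    (pow_le_pow_left₀ (by positivity) cs 2).trans <| cs2.trans <|
      mul_le_mul (h v) (h _) (Finset.sum_nonneg fun _ _ => by positivity) (by positivity)
  by_cases h0 : ‖P v‖ = 0
  · rw [h0]; positivity
  · have hpos : 0 < ‖P v‖ ^ 2 := by positivity
    refine (sq_le_sq₀ (norm_nonneg _) (by positivity)).1 ?_
    refine le_of_mul_le_mul_right (a := ‖P v‖ ^ 2) ?_ hpos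
    nlinarith

/-- A contractive block operator has contractive columns. -/
lemma column_le {n : ℕ} {H : Type*} [NormedAddCommGroup H] [InnerProductSpace ℂ H]
    (T : Fin n → Fin n → H →L[ℂ] H) (hT : ‖blockOp T‖ ≤ 1) (x : Fin n) (v : H) :
    ∑ a, ‖T a x v‖ ^ 2 ≤ ‖v‖ ^ 2 := by
  have h := (blockOp T).le_of_opNorm_le hT (WithLp.toLp 2 (Pi.single x v))
  have h1 : ∀ a, blockOp T (WithLp.toLp 2 (Pi.single x v)) a = T a x v := by
    intro a
    simp only [blockOp, ContinuousLinearMap.comp_apply]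
    change (∑ y : Fin n, (T a y).comp (PiLp.proj 2 (fun _ : Fin n => H) y))
      (WithLp.toLp 2 (Pi.single x v)) = _
    rw [_root_.sum_apply, Finset.sum_eq_single x]
    · simp
    · intro y _ hy
      simp [hy]
    · simp
  have h2 : ‖(WithLp.toLp 2 (Pi.single x v) : PiLp 2 fun _ : Fin n => H)‖ = ‖v‖ := by
    simp
  rw [h2, one_mul] at h
  have h3 := pow_le_pow_left₀ (norm_nonneg _) h 2
  rw [PiLp.norm_sq_eq_of_L2] at h3
  simpa only [h1] using h3

/-- Points with distinct first coordinates `x ≠ x'` lie on exactly one common line, so that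
`(y, b) ↦ (xy - b, x'y - b)` reindexes the double sum. -/
lemma incidence_cross {F M : Type*} [Field F] [Fintype F] [AddCommMonoid M]
    (f : F → F → M) {x x' : F} (hx : x ≠ x') :
    ∑ y, ∑ b, f (x * y - b) (x' * y - b) = ∑ a, ∑ a', f a a' := by
  rw [← Fintype.sum_prod_type', ← Fintype.sum_prod_type']
  refine Fintype.sum_bijective (fun p : F × F => (x * p.1 - p.2, x' * p.1 - p.2)) ?_ _ _
    fun _ => rfl
  refine (Finite.injective_iff_bijective).1 ?_
  rintro ⟨y, b⟩ ⟨y', b'⟩ h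
  simp only [Prod.mk.injEq] at h ⊢
  have h1 : (x - x') * (y - y') = 0 := by linear_combination h.1 - h.2
  have h2 : y = y' := sub_eq_zero.1 ((mul_eq_zero.1 h1).resolve_left (sub_ne_zero.2 hx))
  subst h2
  exact ⟨rfl, by linear_combination -h.1⟩

/-- The `L²` incidence estimate. -/
lemma incidence_sq {F E : Type*} [Field F] [Fintype F] [NormedAddCommGroup E]
    [InnerProductSpace ℂ E] (u : F → F → E) :
    ∑ y, ∑ b, ‖∑ x, u (x * y - b) x‖ ^ 2 ≤
      Fintype.card F * ∑ x, ∑ a, ‖u a x‖ ^ 2 + ‖∑ x, ∑ a, u a x‖ ^ 2 := by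
  classical
  have sq : ∀ w : F → E, ‖∑ x, w x‖ ^ 2 = ∑ x, ∑ x', (inner ℂ (w x) (w x')).re := by
    intro w
    have h1 : ‖∑ x, w x‖ ^ 2 = (inner ℂ (∑ x, w x) (∑ x, w x)).re :=
      (inner_self_eq_norm_sq (𝕜 := ℂ) _).symm
    simp only [h1, sum_inner, Complex.re_sum]
    simp only [inner_sum, Complex.re_sum]
  rw [sq (fun x => ∑ a, u a x)]
  simp only [sq]
  have swap : ∑ y, ∑ b, ∑ x, ∑ x', (inner ℂ (u (x * y - b) x) (u (x' * y - b) x')).re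
      = ∑ x, ∑ x', ∑ y, ∑ b, (inner ℂ (u (x * y - b) x) (u (x' * y - b) x')).re := by
    calc _ = ∑ y, ∑ x, ∑ b, ∑ x', (inner ℂ (u (x * y - b) x) (u (x' * y - b) x')).re :=
          Finset.sum_congr rfl fun y _ => Finset.sum_comm
      _ = ∑ x, ∑ y, ∑ x', ∑ b, (inner ℂ (u (x * y - b) x) (u (x' * y - b) x')).re := by
          rw [Finset.sum_comm]
          exact Finset.sum_congr rfl fun x _ => Finset.sum_congr rfl fun y _ => Finset.sum_comm
      _ = _ := Finset.sum_congr rfl fun x _ => Finset.sum_comm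
  rw [swap, Finset.mul_sum, ← Finset.sum_add_distrib]
  refine Finset.sum_le_sum fun x _ => ?_
  rw [← Finset.add_sum_erase _ _ (Finset.mem_univ x),
    ← Finset.add_sum_erase _ (fun x' => (inner ℂ (∑ a, u a x) (∑ a, u a x')).re)
      (Finset.mem_univ x)]
  have diag : ∑ y, ∑ b, (inner ℂ (u (x * y - b) x) (u (x * y - b) x)).re
      = Fintype.card F * ∑ a, ‖u a x‖ ^ 2 := by
    have h1 : ∀ y, ∑ b, (inner ℂ (u (x * y - b) x) (u (x * y - b) x)).re
        = ∑ a, ‖u a x‖ ^ 2 := fun y =>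
      Fintype.sum_equiv (Equiv.subLeft (x * y)) _ _ fun b =>
        inner_self_eq_norm_sq (𝕜 := ℂ) _
    simp only [h1, Finset.sum_const, Finset.card_univ, nsmul_eq_mul]
  have off : ∑ x' ∈ Finset.univ.erase x,
      ∑ y, ∑ b, (inner ℂ (u (x * y - b) x) (u (x' * y - b) x')).re
      = ∑ x' ∈ Finset.univ.erase x, (inner ℂ (∑ a, u a x) (∑ a, u a x')).re := by
    refine Finset.sum_congr rfl fun x' hx' => ?_
    rw [incidence_cross (fun a a' => (inner ℂ (u a x) (u a' x')).re)
      (Finset.ne_of_mem_erase hx').symm]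
    simp only [sum_inner, Complex.re_sum]
    simp only [inner_sum, Complex.re_sum]
  have nonneg : 0 ≤ (inner ℂ (∑ a, u a x) (∑ a, u a x)).re :=
    inner_self_nonneg (𝕜 := ℂ)
  rw [diag, off]
  linarith

/-- The weighted incidence bound, for `u` and `w` normalized as in the theorem; `N = ‖v‖²`. -/
lemma incidence_bound {F E : Type*} [Field F] [Fintype F] [DecidableEq F]
    [NormedAddCommGroup E] [InnerProductSpace ℂ E] (u w : F → F → E) {N : ℝ} (hN : 0 ≤ N)
    (hu : ∑ x, ∑ a, ‖u a x‖ ^ 2 ≤ Fintype.card F * N)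
    (hu' : ‖∑ x, ∑ a, u a x‖ ^ 2 ≤ (Fintype.card F : ℝ) ^ 2 * N)
    (hw : ∑ y, ∑ b, ‖w b y‖ ^ 2 ≤ Fintype.card F * N) :
    (∑ x, ∑ y, ∑ a, ∑ b, if a + b = x * y then (inner ℂ (u a x) (w b y)).re else 0)
      ≤ 2 * Fintype.card F * Real.sqrt (Fintype.card F) * N := by
  have hq : 0 < (Fintype.card F : ℝ) := by exact_mod_cast Fintype.card_pos
  set q : ℝ := (Fintype.card F : ℝ) with hqdef
  have hs : 0 < √q := Real.sqrt_pos.2 hq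
  have hss : √q * √q = q := Real.mul_self_sqrt hq.le
  have hsum : (∑ x, ∑ y, ∑ a, ∑ b, if a + b = x * y then (inner ℂ (u a x) (w b y)).re else 0)
      = ∑ y, ∑ b, (inner ℂ (∑ x, u (x * y - b) x) (w b y)).re := by
    rw [Finset.sum_comm]
    refine Finset.sum_congr rfl fun y _ => ?_
    simp only [sum_inner, Complex.re_sum]
    rw [Finset.sum_comm (f := fun b x => (inner ℂ (u (x * y - b) x) (w b y)).re)]
    refine Finset.sum_congr rfl fun x _ => ?_
    rw [Finset.sum_comm]
    refine Finset.sum_congr rfl fun b _ => ?_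
    simp only [← eq_sub_iff_add_eq]
    simp
  -- Young's inequality with weight `√q` balances `∑ ‖g‖² ≤ 2q²N` against `∑ ‖w‖² ≤ qN`.
  have young : ∀ g h : E, 2 * √q * (inner ℂ g h).re ≤ ‖g‖ ^ 2 + q * ‖h‖ ^ 2 := by
    intro g h
    have h1 : (inner ℂ g h).re ≤ ‖g‖ * ‖h‖ := re_inner_le_norm (𝕜 := ℂ) g h
    nlinarith [sq_nonneg (‖g‖ - √q * ‖h‖)]
  have h1 : 2 * √q * ∑ y, ∑ b, (inner ℂ (∑ x, u (x * y - b) x) (w b y)).re ≤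
      ∑ y, ∑ b, ‖∑ x, u (x * y - b) x‖ ^ 2 + q * ∑ y, ∑ b, ‖w b y‖ ^ 2 := by
    simp only [Finset.mul_sum, ← Finset.sum_add_distrib]
    exact Finset.sum_le_sum fun y _ => Finset.sum_le_sum fun b _ => young _ _
  have h2 := incidence_sq u
  rw [← hqdef] at h2
  have h3 := mul_le_mul_of_nonneg_left hu hq.le
  have h4 := mul_le_mul_of_nonneg_left hw hq.le
  rw [hsum]
  refine le_of_mul_le_mul_left (a := 2 * √q) ?_ (by positivity)
  have h5 : 2 * √q * (2 * q * √q * N) = 4 * (q ^ 2 * N) := by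
    linear_combination 4 * q * N * hss
  have h6 : 0 ≤ q ^ 2 * N := by positivity
  rw [h5]
  nlinarith

open ContinuousLinearMap in
/-- Square-summability of `A_{a} v = T_a† T_a v` over a contractive column. -/
lemma column_sq_le {ι H : Type*} [Fintype ι] [NormedAddCommGroup H]
    [InnerProductSpace ℂ H] [CompleteSpace H] (R : ι → H →L[ℂ] H)
    (h : ∀ v, ∑ i, ‖R i v‖ ^ 2 ≤ ‖v‖ ^ 2) (v : H) :
    ∑ i, ‖adjoint (R i) (R i v)‖ ^ 2 ≤ ‖v‖ ^ 2 := by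
  refine le_trans (Finset.sum_le_sum fun i _ => ?_) (h v)
  have h1 : ‖R i‖ ≤ 1 := by
    refine opNorm_le_bound _ zero_le_one fun w => ?_
    rw [one_mul]
    refine (sq_le_sq₀ (norm_nonneg _) (norm_nonneg _)).1 ?_
    exact (Finset.single_le_sum (f := fun i => ‖R i w‖ ^ 2) (fun _ _ => by positivity)
      (Finset.mem_univ i)).trans (h w)
  have h2 : ‖adjoint (R i)‖ ≤ 1 := by rwa [LinearIsometryEquiv.norm_map]
  have h3 := (adjoint (R i)).le_of_opNorm_le h2 (R i v)
  rw [one_mul] at h3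
  exact pow_le_pow_left₀ (norm_nonneg _) h3 2

open ContinuousLinearMap in
/-- The quadratic form bound, over an arbitrary finite field. -/
lemma quadratic_bound {F H : Type*} [Field F] [Fintype F] [DecidableEq F] [NormedAddCommGroup H]
    [InnerProductSpace ℂ H] [CompleteSpace H] (T S : F → F → H →L[ℂ] H)
    (hT : ∀ x v, ∑ a, ‖T a x v‖ ^ 2 ≤ ‖v‖ ^ 2) (hS : ∀ y v, ∑ b, ‖S b y v‖ ^ 2 ≤ ‖v‖ ^ 2)
    (hcomm : ∀ a x b y, T a x ∘L S b y = S b y ∘L T a x)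
    (hcomm' : ∀ a x b y, T a x ∘L adjoint (S b y) = adjoint (S b y) ∘L T a x) (v : H) :
    (∑ x, ∑ y, ∑ a, ∑ b, if a + b = x * y then ‖T a x (S b y v)‖ ^ 2 else 0)
      ≤ 2 * Fintype.card F * Real.sqrt (Fintype.card F) * ‖v‖ ^ 2 := by
  have hin : ∀ a x b y, ‖T a x (S b y v)‖ ^ 2 =
      (inner ℂ (adjoint (T a x) (T a x v)) (adjoint (S b y) (S b y v))).re := by
    intro a x b y
    have c1 : ∀ w, T a x (S b y w) = S b y (T a x w) := fun w =>
      congrArg (fun f : H →L[ℂ] H => f w) (hcomm a x b y)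
    have c2 : ∀ w, T a x (adjoint (S b y) w) = adjoint (S b y) (T a x w) := fun w =>
      congrArg (fun f : H →L[ℂ] H => f w) (hcomm' a x b y)
    have h1 : ‖T a x (S b y v)‖ ^ 2 = (inner ℂ (T a x (S b y v)) (T a x (S b y v))).re :=
      (inner_self_eq_norm_sq (𝕜 := ℂ) _).symm
    rw [h1, adjoint_inner_left, c2, adjoint_inner_right, c1]
  have hcol : ∀ x, ‖∑ a, adjoint (T a x) (T a x v)‖ ≤ ‖v‖ := by
    intro x
    have h1 := norm_sum_adjoint_comp_le (fun a => T a x) zero_le_one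
      (fun v => by simpa using hT x v)
    have h2 := le_of_opNorm_le _ h1 v
    simpa using h2
  simp only [hin]
  refine incidence_bound (fun a x => adjoint (T a x) (T a x v))
    (fun b y => adjoint (S b y) (S b y v)) (sq_nonneg _) ?_ ?_ ?_
  · refine (Finset.sum_le_sum fun x _ => column_sq_le (fun a => T a x) (hT x) v).trans ?_
    simp
  · rw [← mul_pow]
    refine pow_le_pow_left₀ (norm_nonneg _) ((norm_sum_le _ _).trans ?_) 2
    refine (Finset.sum_le_sum fun x _ => hcol x).trans ?_
    simp
  · refine (Finset.sum_le_sum fun y _ => column_sq_le (fun b => S b y) (hS y) v).trans ?_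
    simp

theorem stmt_4 {n : ℕ} (hn : n.Prime) {H : Type*} [NormedAddCommGroup H]
    [InnerProductSpace ℂ H] [CompleteSpace H]
    (T S : Fin n → Fin n → H →L[ℂ] H)
    (hT : ‖blockOp T‖ ≤ 1) (hS : ‖blockOp S‖ ≤ 1)
    (hcomm : ∀ a x b y, T a x ∘L S b y = S b y ∘L T a x)
    (hcomm' : ∀ a x b y,
      T a x ∘L ContinuousLinearMap.adjoint (S b y) =
        ContinuousLinearMap.adjoint (S b y) ∘L T a x) :
    ‖∑ x : Fin n, ∑ y : Fin n, ∑ a : Fin n, ∑ b : Fin n,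
        if a + b = x * y then
          ContinuousLinearMap.adjoint (T a x ∘L S b y) ∘L (T a x ∘L S b y)
        else 0‖ ≤ 2 * n * Real.sqrt n := by
  have quad : ∀ v : H, (∑ x : Fin n, ∑ y : Fin n, ∑ a : Fin n, ∑ b : Fin n,
      if a + b = x * y then ‖T a x (S b y v)‖ ^ 2 else 0) ≤ 2 * n * Real.sqrt n * ‖v‖ ^ 2 := by
    intro v
    cases n with
    | zero => exact absurd hn Nat.not_prime_zero
    | succ m =>
      have : Fact (m + 1).Prime := ⟨hn⟩
      -- `ZMod (m + 1)` unfolds to `Fin (m + 1)` with the same arithmetic, and is a field.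
      have h := quadratic_bound (F := ZMod (m + 1)) T S (column_le T hT) (column_le S hS)
        hcomm hcomm' v
      refine h.trans_eq ?_
      change 2 * (Fintype.card (Fin (m + 1)) : ℝ) * √(Fintype.card (Fin (m + 1)) : ℝ) * _ = _
      rw [Fintype.card_fin]
  -- The quadruple sum as one sum of `R† R`, with `R = 0` off the incidence set.
  have hc : (0 : ℝ) ≤ 2 * n * Real.sqrt n := by positivity
  have main := norm_sum_adjoint_comp_le
    (fun p : Fin n × Fin n × Fin n × Fin n =>
      if p.2.2.1 + p.2.2.2 = p.1 * p.2.1 then T p.2.2.1 p.1 ∘L S p.2.2.2 p.2.1 else 0) hc ?_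
  · simp only [Fintype.sum_prod_type] at main
    convert main using 11
    split_ifs <;> simp
  · intro v
    refine le_trans (le_of_eq ?_) (quad v)
    simp only [Fintype.sum_prod_type]
    refine Finset.sum_congr rfl fun x _ => Finset.sum_congr rfl fun y _ =>
      Finset.sum_congr rfl fun a _ => Finset.sum_congr rfl fun b _ => ?_
    split_ifs <;> simp
end

section
/- Core estimate in the proof of Lemma 3.3: Let n be a prime number, ω = exp(2πi/n), H a complex Hilbert space, and for each x, y, k ∈ Z_n let T_x^k and S_y^k be contractions in B(H) (no commutation assumptions). Then ‖(1/n)·∑_{k∈Z_n} ∑_{x,y∈Z_n} ω^{−kxy} T_x^k S_y^k‖ ≤ n + (n−1)√n; in particular this quantity is at most 2n√n. -/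
/-!
Fix a vector `ξ` and write `s_y = S_y^k ξ`, `w_x = ∑_y ω^{-kxy} s_y`.  The `k`-th summand applied to
`ξ` is `∑_x T_x^k w_x`, whose norm is at most `∑_x ‖w_x‖ ≤ √n (∑_x ‖w_x‖²)^{1/2}`.  For `k ≠ 0` the
columns of `(ω^{-kxy})` are orthogonal with squared length `n` (`fourier_orthogonality`; this is where
primality enters), so Parseval (`sum_norm_sq_of_orthogonal`) gives `∑_x ‖w_x‖² = n ∑_y ‖s_y‖² ≤ n²‖ξ‖²`
and the summand has norm at most `n√n`.  For `k = 0` the triangle inequality gives `n²`.  Adding up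
and dividing by `n` yields `n + (n-1)√n`.  Bounding the vectors `w_x` directly, rather than pairing
with a second vector, avoids adjoints, so completeness of `H` plays no role.
-/

/-- Parseval's identity for vector-valued coefficients: a matrix whose columns are orthogonal of
squared length `n` scales `ℓ²`-norms of `H`-valued tuples by `√n`. -/
lemma sum_norm_sq_of_orthogonal {n : ℕ} {H : Type*} [NormedAddCommGroup H]
    [InnerProductSpace ℂ H] (a : Fin n → Fin n → ℂ)
    (ha : ∀ y z, ∑ x, (starRingEnd ℂ) (a x y) * a x z = if y = z then (n : ℂ) else 0)
    (s : Fin n → H) :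
    ∑ x, ‖∑ y, a x y • s y‖ ^ 2 = n * ∑ y, ‖s y‖ ^ 2 := by
  have h : ∑ x, inner ℂ (∑ y, a x y • s y) (∑ y, a x y • s y)
      = (n : ℂ) * ∑ y, inner ℂ (s y) (s y) := by
    calc ∑ x, inner ℂ (∑ y, a x y • s y) (∑ y, a x y • s y)
        = ∑ x, ∑ y, ∑ z, (starRingEnd ℂ) (a x y) * a x z * inner ℂ (s y) (s z) := by
          refine Finset.sum_congr rfl fun x _ => ?_
          rw [sum_inner]
          refine Finset.sum_congr rfl fun y _ => ?_
          rw [inner_sum]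
          refine Finset.sum_congr rfl fun z _ => ?_
          rw [inner_smul_left, inner_smul_right, mul_assoc]
      _ = ∑ y, ∑ z, (∑ x, (starRingEnd ℂ) (a x y) * a x z) * inner ℂ (s y) (s z) := by
          rw [Finset.sum_comm]
          refine Finset.sum_congr rfl fun y _ => ?_
          rw [Finset.sum_comm]
          refine Finset.sum_congr rfl fun z _ => ?_
          rw [Finset.sum_mul]
      _ = (n : ℂ) * ∑ y, inner ℂ (s y) (s y) := by
          simp [ha, Finset.mul_sum]
  simp only [inner_self_eq_norm_sq_to_K] at h
  apply Complex.ofReal_injective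
  push_cast
  exact h

/-- Distinct columns of the Fourier matrix `(ω^{-kxy})` are orthogonal when `n` is prime and
`k ≠ 0`: the inner product is a geometric sum with ratio `ω^{k(y-z)} ≠ 1`. -/
lemma fourier_orthogonality {n : ℕ} (hn : n.Prime) {ω : ℂ} (hω : IsPrimitiveRoot ω n)
    (k : Fin n) (hk : k.val ≠ 0) (y z : Fin n) :
    ∑ x : Fin n, (starRingEnd ℂ) (ω ^ (-((k.val * x.val * y.val : ℕ) : ℤ))) *
      ω ^ (-((k.val * x.val * z.val : ℕ) : ℤ)) = if y = z then (n : ℂ) else 0 := by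
  have hω0 : ω ≠ 0 := hω.ne_zero hn.ne_zero
  have hconj : (starRingEnd ℂ) ω = ω⁻¹ :=
    (Complex.inv_eq_conj (hω.norm'_eq_one hn.ne_zero)).symm
  set ζ : ℂ := ω ^ ((k.val : ℤ) * ((y.val : ℤ) - z.val)) with hζ
  have hterm : ∀ x : Fin n, (starRingEnd ℂ) (ω ^ (-((k.val * x.val * y.val : ℕ) : ℤ))) *
      ω ^ (-((k.val * x.val * z.val : ℕ) : ℤ)) = ζ ^ x.val := by
    intro x
    rw [map_zpow₀, hconj, inv_zpow', ← zpow_add₀ hω0, hζ, ← zpow_natCast, ← zpow_mul]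
    congr 1
    push_cast
    ring
  rw [Finset.sum_congr rfl fun x _ => hterm x, Fin.sum_univ_eq_sum_range (fun i => ζ ^ i)]
  split_ifs with h
  · simp [hζ, h]
  · have hζn : ζ ^ n = 1 := by
      rw [hζ, ← zpow_natCast, ← zpow_mul, mul_comm, zpow_mul, zpow_natCast, hω.pow_eq_one,
        one_zpow]
    have hζ1 : ζ ≠ 1 := by
      intro h1
      rw [hζ, hω.zpow_eq_one_iff_dvd] at h1
      rcases (Nat.prime_iff_prime_int.mp hn).dvd_or_dvd h1 with h2 | h2
      · exact hk (Nat.eq_zero_of_dvd_of_lt (Int.natCast_dvd_natCast.mp h2) k.isLt)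
      · have h3 := Int.eq_zero_of_abs_lt_dvd h2 (by
          have := y.isLt
          have := z.isLt
          rw [abs_lt]; omega)
        exact h (Fin.ext (by omega))
    rw [geom_sum_eq hζ1, hζn]
    simp

/-- The bound `n√n` for one value of `k`, for any coefficient matrix with orthogonal columns of
squared length `n`: Cauchy–Schwarz in `x`, then Parseval. -/
lemma norm_summand_le {n : ℕ} {H : Type*} [NormedAddCommGroup H]
    [InnerProductSpace ℂ H] (a : Fin n → Fin n → ℂ)
    (ha : ∀ y z, ∑ x, (starRingEnd ℂ) (a x y) * a x z = if y = z then (n : ℂ) else 0)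
    (T S : Fin n → H →L[ℂ] H) (hT : ∀ x, ‖T x‖ ≤ 1) (hS : ∀ y, ‖S y‖ ≤ 1) :
    ‖∑ x, ∑ y, a x y • (T x ∘L S y)‖ ≤ n * Real.sqrt n := by
  refine ContinuousLinearMap.opNorm_le_bound _ (by positivity) fun ξ => ?_
  have happ : (∑ x, ∑ y, a x y • (T x ∘L S y)) ξ = ∑ x, T x (∑ y, a x y • S y ξ) := by
    simp [map_sum]
  have hle : ‖∑ x, T x (∑ y, a x y • S y ξ)‖ ≤ ∑ x, ‖∑ y, a x y • S y ξ‖ :=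
    (norm_sum_le _ _).trans (Finset.sum_le_sum fun x _ =>
      (T x).le_of_opNorm_le (hT x) _ |>.trans_eq (one_mul _))
  have hS2 : ∑ y, ‖S y ξ‖ ^ 2 ≤ n * ‖ξ‖ ^ 2 := by
    calc ∑ y, ‖S y ξ‖ ^ 2 ≤ ∑ _y : Fin n, ‖ξ‖ ^ 2 := by
          refine Finset.sum_le_sum fun y _ => ?_
          have := (S y).le_of_opNorm_le (hS y) ξ
          rw [one_mul] at this
          gcongr
      _ = n * ‖ξ‖ ^ 2 := by simp
  have hcs : (∑ x, ‖∑ y, a x y • S y ξ‖) ^ 2 ≤ n * ∑ x, ‖∑ y, a x y • S y ξ‖ ^ 2 := by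
    simpa using sq_sum_le_card_mul_sum_sq (s := (Finset.univ : Finset (Fin n)))
      (f := fun x => ‖∑ y, a x y • S y ξ‖)
  rw [sum_norm_sq_of_orthogonal a ha] at hcs
  rw [happ]
  refine hle.trans (abs_le_of_sq_le_sq' ?_ (by positivity)).2
  calc _ ≤ (n : ℝ) * (n * ∑ y, ‖S y ξ‖ ^ 2) := hcs
    _ ≤ n * (n * (n * ‖ξ‖ ^ 2)) := by gcongr
    _ = (n * Real.sqrt n * ‖ξ‖) ^ 2 := by
      rw [mul_pow, mul_pow, Real.sq_sqrt (Nat.cast_nonneg n)]; ring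

theorem stmt_10 {n : ℕ} (hn : n.Prime) {H : Type*} [NormedAddCommGroup H]
    [InnerProductSpace ℂ H] (T S : Fin n → Fin n → H →L[ℂ] H)
    (hT : ∀ x k, ‖T x k‖ ≤ 1) (hS : ∀ y k, ‖S y k‖ ≤ 1) :
    ‖(n : ℂ)⁻¹ • ∑ k : Fin n, ∑ x : Fin n, ∑ y : Fin n,
          (Complex.exp (2 * Real.pi * Complex.I / n) ^
              (-((k.val * x.val * y.val : ℕ) : ℤ))) • (T x k ∘L S y k)‖
        ≤ (n : ℝ) + ((n : ℝ) - 1) * Real.sqrt n ∧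
    ‖(n : ℂ)⁻¹ • ∑ k : Fin n, ∑ x : Fin n, ∑ y : Fin n,
          (Complex.exp (2 * Real.pi * Complex.I / n) ^
              (-((k.val * x.val * y.val : ℕ) : ℤ))) • (T x k ∘L S y k)‖
        ≤ 2 * n * Real.sqrt n := by
  have hω := Complex.isPrimitiveRoot_exp n hn.ne_zero
  set ω : ℂ := Complex.exp (2 * Real.pi * Complex.I / n)
  have hn0 : (0 : ℝ) < n := by exact_mod_cast hn.pos
  have hn1 : (1 : ℝ) ≤ n := by exact_mod_cast hn.one_le
  set A : Fin n → H →L[ℂ] H := fun k => ∑ x : Fin n, ∑ y : Fin n,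
    (ω ^ (-((k.val * x.val * y.val : ℕ) : ℤ))) • (T x k ∘L S y k) with hA
  let k₀ : Fin n := ⟨0, hn.pos⟩
  have h0 : ‖A k₀‖ ≤ (n : ℝ) * n := by
    calc ‖A k₀‖ ≤ ∑ x : Fin n, ∑ y : Fin n, (1 : ℝ) := by
          refine norm_sum_le_of_le _ fun x _ => norm_sum_le_of_le _ fun y _ => ?_
          simp only [k₀, zero_mul, Nat.cast_zero, neg_zero, zpow_zero, one_smul]
          exact (ContinuousLinearMap.opNorm_comp_le _ _).trans
            (mul_le_one₀ (hT x _) (norm_nonneg _) (hS y _))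
      _ = (n : ℝ) * n := by simp
  have hk : ∀ k ∈ Finset.univ.erase k₀, ‖A k‖ ≤ n * Real.sqrt n := by
    intro k hk
    have hk' : k.val ≠ 0 := fun h => Finset.ne_of_mem_erase hk (Fin.ext h)
    exact norm_summand_le (fun x y => ω ^ (-((k.val * x.val * y.val : ℕ) : ℤ)))
      (fourier_orthogonality hn hω k hk') (fun x => T x k) (fun y => S y k)
      (fun x => hT x k) (fun y => hS y k)
  have hsum : ‖∑ k, A k‖ ≤ (n : ℝ) * n + (n - 1) * (n * Real.sqrt n) := by
    rw [← Finset.add_sum_erase _ _ (Finset.mem_univ k₀)]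
    refine (norm_add_le _ _).trans (add_le_add h0 ((norm_sum_le_of_le _ hk).trans_eq ?_))
    simp [Finset.card_erase_of_mem, Nat.cast_sub hn.one_le]
  have main : ‖(n : ℂ)⁻¹ • ∑ k, A k‖ ≤ (n : ℝ) + ((n : ℝ) - 1) * Real.sqrt n := by
    rw [norm_smul, norm_inv, Complex.norm_natCast, inv_mul_le_iff₀ hn0]
    exact hsum.trans_eq (by ring)
  refine ⟨main, main.trans ?_⟩
  have hs : 1 ≤ Real.sqrt n := Real.one_le_sqrt.mpr hn1
  nlinarith
end
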